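/- Let G be a finite simple graph, let [U_0, U_1, …, U_q] (q ≥ 1) and [V_0, V_1, …, V_p] (p ≥ 1) be separations of G with U_0 ⊆ V_0, and suppose that every V_i with 1 ≤ i ≤ p is contained in some U_j with 1 ≤ j ≤ q. For each j with 1 ≤ j ≤ q, let W_j be the set of vertices of the subgraph G(U_j) that do not belong to any V_i with 1 ≤ i ≤ p and V_i ⊆ U_j. Then for each j, W_j = (V_0 ∩ U_j) ∪ Nbr_G(U_j), so |W_j| = |V_0 ∩ U_j| + nbr_G(U_j), and moreover Σ_{j=1}^q |W_j| ≤ |V_0| + Σ_{j=1}^q nbr_G(U_j). -/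

import Mathlib

/-- `Nbr G V`: vertices outside `V` adjacent in `G` to some vertex of `V`. -/
def Nbr {α : Type*} (G : SimpleGraph α) (V : Set α) : Set α :=
  {v | v ∉ V ∧ ∃ u ∈ V, G.Adj u v}

/-- The sizes of pairwise disjoint subsets of `T` add up to at most the size of `T`. -/
theorem sum_ncard_le_of_pairwiseDisjoint {α ι : Type*} [Finite α] {T : Set α} (s : Finset ι)
    {A : ι → Set α} (hA : (s : Set ι).PairwiseDisjoint A) (hT : ∀ i ∈ s, A i ⊆ T) :
    ∑ i ∈ s, (A i).ncard ≤ T.ncard := by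
  classical
  have := Fintype.ofFinite α
  simp only [Set.ncard_eq_toFinset_card']
  rw [← Finset.card_biUnion fun i hi j hj hij => Set.disjoint_toFinset.mpr (hA hi hj hij)]
  exact Finset.card_le_card (Finset.biUnion_subset.mpr fun i hi =>
    Set.toFinset_subset_toFinset.mpr (hT i hi))

/-- Let `[U 0, …, U q]` and `[V 0, …, V p]` be separations of a finite simple
graph `G` with `U 0 ⊆ V 0`, where each `V i` (`1 ≤ i ≤ p`) is contained in
some `U j` (`1 ≤ j ≤ q`).  For `1 ≤ j ≤ q` let `W j` consist of the vertices
of `G(U j)` lying in no `V i` with `1 ≤ i ≤ p` and `V i ⊆ U j`.  Then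
`W j = (V 0 ∩ U j) ∪ Nbr G (U j)`, hence
`|W j| = |V 0 ∩ U j| + nbr_G(U j)`, and
`Σ_{j=1}^q |W j| ≤ |V 0| + Σ_{j=1}^q nbr_G(U j)`. -/
theorem boundary_vertices_of_refinement {α : Type*} [Fintype α] (G : SimpleGraph α)
    (q p : ℕ) (U V : ℕ → Set α) (hq : 1 ≤ q) (hp : 1 ≤ p)
    (hUdisj : ∀ j j', j ≤ q → j' ≤ q → j ≠ j' → Disjoint (U j) (U j'))
    (hUcover : ∀ v, ∃ j, j ≤ q ∧ v ∈ U j)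
    (hUsep : ∀ j j', 1 ≤ j → j ≤ q → 1 ≤ j' → j' ≤ q → j ≠ j' →
      ∀ u ∈ U j, ∀ w ∈ U j', ¬ G.Adj u w)
    (hVdisj : ∀ i i', i ≤ p → i' ≤ p → i ≠ i' → Disjoint (V i) (V i'))
    (hVcover : ∀ v, ∃ i, i ≤ p ∧ v ∈ V i)
    (hVsep : ∀ i i', 1 ≤ i → i ≤ p → 1 ≤ i' → i' ≤ p → i ≠ i' →
      ∀ u ∈ V i, ∀ w ∈ V i', ¬ G.Adj u w)
    (hU0V0 : U 0 ⊆ V 0)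
    (href : ∀ i, 1 ≤ i → i ≤ p → ∃ j, 1 ≤ j ∧ j ≤ q ∧ V i ⊆ U j)
    (W : ℕ → Set α)
    (hW : ∀ j, 1 ≤ j → j ≤ q →
      W j = (U j ∪ Nbr G (U j)) \ ⋃ i ∈ {i : ℕ | 1 ≤ i ∧ i ≤ p ∧ V i ⊆ U j}, V i) :
    (∀ j, 1 ≤ j → j ≤ q →
        W j = (V 0 ∩ U j) ∪ Nbr G (U j) ∧
        (W j).ncard = (V 0 ∩ U j).ncard + (Nbr G (U j)).ncard) ∧
    ∑ j ∈ Finset.Icc 1 q, (W j).ncard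
      ≤ (V 0).ncard + ∑ j ∈ Finset.Icc 1 q, (Nbr G (U j)).ncard := by
  have key : ∀ j, 1 ≤ j → j ≤ q →
      W j = (V 0 ∩ U j) ∪ Nbr G (U j) ∧
      (W j).ncard = (V 0 ∩ U j).ncard + (Nbr G (U j)).ncard := by
    intro j hj hjq
    have hWj : W j = (V 0 ∩ U j) ∪ Nbr G (U j) := by
      rw [hW j hj hjq]
      ext v
      simp only [Set.mem_sdiff, Set.mem_union, Set.mem_iUnion, Set.mem_inter_iff,
        Set.mem_ofPred_eq, exists_prop, not_exists, not_and]
      constructor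
      · rintro ⟨hv | hv, hnot⟩
        · left
          obtain ⟨i, hip, hvi⟩ := hVcover v
          rcases Nat.eq_zero_or_pos i with rfl | hi
          · exact ⟨hvi, hv⟩
          · obtain ⟨k, _, hkq, hik⟩ := href i hi hip
            have hkj : k = j := by
              by_contra hne
              exact Set.disjoint_left.mp (hUdisj k j hkq hjq hne) (hik hvi) hv
            exact absurd hvi (hnot i ⟨hi, hip, hkj ▸ hik⟩)
        · exact Or.inr hv
      · rintro (⟨hv0, hv⟩ | hv)
        · exact ⟨Or.inl hv, fun i ⟨hi, hip, _⟩ hvi =>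
            Set.disjoint_left.mp (hVdisj 0 i (Nat.zero_le p) hip (by omega)) hv0 hvi⟩
        · exact ⟨Or.inr hv, fun i ⟨_, _, hij⟩ hvi => hv.1 (hij hvi)⟩
    refine ⟨hWj, ?_⟩
    rw [hWj]
    exact Set.ncard_union_eq (Set.disjoint_left.mpr fun v hv hn => hn.1 hv.2)
      (Set.toFinite _) (Set.toFinite _)
  refine ⟨key, ?_⟩
  have hdisj : ((Finset.Icc 1 q : Finset ℕ) : Set ℕ).PairwiseDisjoint
      fun j => V 0 ∩ U j := by
    intro j hj k hk hjk
    rw [Finset.mem_coe, Finset.mem_Icc] at hj hk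
    exact (hUdisj j k hj.2 hk.2 hjk).mono Set.inter_subset_right Set.inter_subset_right
  have hsum : ∑ j ∈ Finset.Icc 1 q, (V 0 ∩ U j).ncard ≤ (V 0).ncard :=
    sum_ncard_le_of_pairwiseDisjoint _ hdisj fun _ _ => Set.inter_subset_left
  calc ∑ j ∈ Finset.Icc 1 q, (W j).ncard
      = ∑ j ∈ Finset.Icc 1 q, ((V 0 ∩ U j).ncard + (Nbr G (U j)).ncard) :=
        Finset.sum_congr rfl fun j hj =>
          (key j (Finset.mem_Icc.mp hj).1 (Finset.mem_Icc.mp hj).2).2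
    _ ≤ (V 0).ncard + ∑ j ∈ Finset.Icc 1 q, (Nbr G (U j)).ncard := by
        rw [Finset.sum_add_distrib]
        exact Nat.add_le_add_right hsum _
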